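/- Let w₀, w₁, w₂, d be positive integers with w₀, w₁, w₂ pairwise coprime. Let v₁, v₂, v₃ ∈ ℤ³ be lattice points each satisfying w₀·x + w₁·y + w₂·z = d, and suppose v₁, v₂, v₃ are affinely independent (i.e., the triangle they span is nondegenerate). Then |det(v₁, v₂, v₃)| is a positive integer multiple of d; in particular |det(v₁, v₂, v₃)| ≥ d. -/

import Mathlib

/-! Let `M` be the matrix with rows `v₁, v₂, v₃` and `w = (w₀, w₁, w₂)`. Then `M w = d (1, 1, 1)`,
so multiplying by the adjugate shows that `d` divides `det M * wⱼ` for every `j`, hence `det M`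
itself by a Bézout relation among the `wⱼ`. The rows lie in an affine hyperplane avoiding the
origin, where affine independence forces linear independence, so `det M ≠ 0`. -/

/-- The coercion of an integer lattice point of `ℤ³` to `ℝ³`. -/
def toR3 (v : Fin 3 → ℤ) : Fin 3 → ℝ := fun i => (v i : ℝ)

section Divisibility

variable {R : Type*} [CommRing R]

theorem span_range_eq_top_of_isCoprime {ι : Type*} {w : ι → R} {i j : ι}
    (h : IsCoprime (w i) (w j)) : Ideal.span (Set.range w) = ⊤ := by
  obtain ⟨a, b, hab⟩ := h
  have mem_span (k : ι) : w k ∈ Ideal.span (Set.range w) := Ideal.subset_span ⟨k, rfl⟩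
  rw [Ideal.eq_top_iff_one, ← hab]
  exact add_mem (Ideal.mul_mem_left _ a (mem_span i)) (Ideal.mul_mem_left _ b (mem_span j))

theorem dvd_of_forall_dvd_mul_of_span_range_eq_top {ι : Type*} {w : ι → R} {d x : R}
    (hw : Ideal.span (Set.range w) = ⊤) (h : ∀ i, d ∣ x * w i) : d ∣ x := by
  have span_le : Ideal.span (Set.range w) ≤
      Submodule.comap (LinearMap.mulLeft R x) (Ideal.span {d}) := by
    rw [Ideal.span_le, Set.range_subset_iff]
    exact fun i => Ideal.mem_span_singleton.mpr (h i)
  have one_mem : (1 : R) ∈ Ideal.span (Set.range w) := hw ▸ Submodule.mem_top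
  simpa [Ideal.mem_span_singleton] using span_le one_mem

variable {n : Type*} [Fintype n] [DecidableEq n]

open Matrix

theorem adjugate_mulVec_mulVec (M : Matrix n n R) (w : n → R) :
    M.adjugate *ᵥ (M *ᵥ w) = M.det • w := by
  rw [mulVec_mulVec, adjugate_mul, smul_mulVec, one_mulVec]

variable {M : Matrix n n R} {w : n → R} {d : R}

theorem dvd_det_mul_of_forall_dvd_mulVec (hM : ∀ i, d ∣ (M *ᵥ w) i) (j : n) :
    d ∣ M.det * w j := by
  have hdet : M.det * w j = ∑ i, M.adjugate j i * (M *ᵥ w) i :=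
    (congrFun (adjugate_mulVec_mulVec M w) j).symm
  rw [hdet]
  exact Finset.dvd_sum fun i _ => (hM i).mul_left _

theorem dvd_det_of_forall_dvd_mulVec (hw : Ideal.span (Set.range w) = ⊤)
    (hM : ∀ i, d ∣ (M *ᵥ w) i) : d ∣ M.det :=
  dvd_of_forall_dvd_mul_of_span_range_eq_top hw (dvd_det_mul_of_forall_dvd_mulVec hM)

end Divisibility

section Independence

theorem linearIndependent_of_affineIndependent_of_apply_eq {k V ι : Type*} [Ring k]
    [NoZeroDivisors k] [AddCommGroup V] [Module k V] {p : ι → V} (hp : AffineIndependent k p)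
    (f : V →ₗ[k] k) {a : k} (ha : a ≠ 0) (hf : ∀ i, f (p i) = a) : LinearIndependent k p := by
  rw [linearIndependent_iff']
  intro s c hc
  have hsum : (∑ i ∈ s, c i) * a = 0 := by
    simpa [hf, Finset.sum_mul] using congrArg f hc
  exact hp.eq_zero_of_sum_eq_zero ((mul_eq_zero.mp hsum).resolve_right ha) hc

theorem affineIndependent_restrictScalars (R : Type*) {K V P ι : Type*} [Ring R] [Ring K]
    [AddCommGroup V] [Module R K] [Module R V] [Module K V] [IsScalarTower R K V]
    [IsScalarTower R K K] [FaithfulSMul R K] [AddTorsor V P] {p : ι → P}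
    (hp : AffineIndependent K p) : AffineIndependent R p := by
  rcases isEmpty_or_nonempty ι with _ | ⟨⟨i⟩⟩
  · exact affineIndependent_of_subsingleton R p
  · rw [affineIndependent_iff_linearIndependent_vsub _ p i] at hp ⊢
    exact hp.restrict_scalars' R

theorem affineIndependent_int_of_toR3 {ι : Type*} {v : ι → Fin 3 → ℤ}
    (hv : AffineIndependent ℝ (toR3 ∘ v)) : AffineIndependent ℤ v :=
  (affineIndependent_restrictScalars ℤ hv).of_comp
    ((Algebra.linearMap ℤ ℝ).compLeft (Fin 3)).toAffineMap

open Matrix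

theorem det_ne_zero_of_affineIndependent_of_mulVec_eq {R n : Type*} [CommRing R] [IsDomain R]
    [Fintype n] [DecidableEq n] {M : Matrix n n R} {w : n → R} {d : R} (hd : d ≠ 0)
    (hM : ∀ i, (M *ᵥ w) i = d) (haff : AffineIndependent R M.row) : M.det ≠ 0 := by
  have hlin : LinearIndependent R M.row :=
    linearIndependent_of_affineIndependent_of_apply_eq haff ((dotProductBilin R R).flip w) hd hM
  intro hdet
  obtain ⟨c, hc, hcM⟩ := exists_vecMul_eq_zero_iff.mpr hdet
  exact hc (vecMul_injective_iff.mpr hlin (hcM.trans (zero_vecMul M).symm))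

end Independence

open Matrix in
theorem abs_det_multiple_of_d_general {n : Type*} [Fintype n] [DecidableEq n] {M : Matrix n n ℤ}
    {w : n → ℤ} {d : ℤ} (hw : Ideal.span (Set.range w) = ⊤) (hd : d ≠ 0)
    (hM : ∀ i, (M *ᵥ w) i = d) (haff : AffineIndependent ℤ M.row) :
    (∃ m : ℤ, 0 < m ∧ |M.det| = m * |d|) ∧ |d| ≤ |M.det| := by
  have hpos : 0 < |M.det| :=
    abs_pos.mpr (det_ne_zero_of_affineIndependent_of_mulVec_eq hd hM haff)
  have hdvd : |d| ∣ |M.det| :=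
    (abs_dvd_abs d M.det).mpr (dvd_det_of_forall_dvd_mulVec hw fun i => (hM i).symm.dvd)
  refine ⟨?_, Int.le_of_dvd hpos hdvd⟩
  obtain ⟨m, hm⟩ := exists_eq_mul_left_of_dvd hdvd
  exact ⟨m, pos_of_mul_pos_left (hm ▸ hpos) (abs_nonneg d), hm⟩

/-- If `w0, w1, w2` are pairwise coprime positive integers and `v1, v2, v3 ∈ ℤ³` are affinely
independent points on the plane `w0*x + w1*y + w2*z = d`, then `|det(v1, v2, v3)|` is a positive
integer multiple of `d`; in particular `|det(v1, v2, v3)| ≥ d`. -/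
theorem abs_det_multiple_of_d (w0 w1 w2 d : ℕ) (hw0 : 0 < w0) (hw1 : 0 < w1) (hw2 : 0 < w2)
    (hd : 0 < d)
    (h01 : Nat.Coprime w0 w1) (h02 : Nat.Coprime w0 w2) (h12 : Nat.Coprime w1 w2)
    (v1 v2 v3 : Fin 3 → ℤ)
    (hv1 : (w0 : ℤ) * v1 0 + (w1 : ℤ) * v1 1 + (w2 : ℤ) * v1 2 = (d : ℤ))
    (hv2 : (w0 : ℤ) * v2 0 + (w1 : ℤ) * v2 1 + (w2 : ℤ) * v2 2 = (d : ℤ))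
    (hv3 : (w0 : ℤ) * v3 0 + (w1 : ℤ) * v3 1 + (w2 : ℤ) * v3 2 = (d : ℤ))
    (haff : AffineIndependent ℝ ![toR3 v1, toR3 v2, toR3 v3]) :
    (∃ m : ℤ, 0 < m ∧ |(Matrix.of ![v1, v2, v3]).det| = m * (d : ℤ)) ∧
      (d : ℤ) ≤ |(Matrix.of ![v1, v2, v3]).det| := by
  have hw : Ideal.span (Set.range ![(w0 : ℤ), w1, w2]) = ⊤ :=
    span_range_eq_top_of_isCoprime (i := 0) (j := 1) h01.isCoprime
  have hM : ∀ i, (Matrix.of ![v1, v2, v3]).mulVec ![(w0 : ℤ), w1, w2] i = d := by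
    simpa [Fin.forall_fin_succ, Matrix.mulVec, dotProduct, Fin.sum_univ_three, mul_comm] using
      ⟨hv1, hv2, hv3⟩
  have hv : AffineIndependent ℝ (toR3 ∘ ![v1, v2, v3]) := by
    rwa [← FinVec.map_eq]
  simpa using abs_det_multiple_of_d_general hw (Nat.cast_ne_zero.mpr hd.ne') hM
    (affineIndependent_int_of_toR3 hv)
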